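/- Let N ≥ 3, 2* = 2N/(N−2), q ∈ (1, 2*−1), β > 0, and let a, b satisfy (a₁), (b₁), (a₂); fix Ω'_Γ as above, let δ₀ ∈ (0,1) and ν₀ > 0 be constants for which the inequality δ₀ ∫_{ℝ^N} K(|∇u|² + (λ a + b) u²) dx ≤ ∫_{ℝ^N} K(|∇u|² + (λ a + b) u²) dx − ν₀ ∫_{ℝ^N} K u² dx holds for all λ ≥ 1 and all admissible u, and define f, F, g, G accordingly. Then for every λ ≥ 1 and every continuously differentiable u : ℝ^N → ℝ for which ‖u‖²_{K,λ} := ∫_{ℝ^N} K(|∇u|² + (λ a + b)u²) dx, ∫_{ℝ^N} K G(x,u) dx and ∫_{ℝ^N} K g(x,u) u dx are finite, one has δ₀ (1/2 − 1/(q+1)) ‖u‖²_{K,λ} ≤ Φ_λ(u) − (1/(q+1)) ⟨Φ'_λ(u), u⟩. -/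

import Mathlib

open MeasureTheory Real Filter Topology RealInnerProductSpace

noncomputable section

abbrev En (N : ℕ) := EuclideanSpace ℝ (Fin N)

/-- The weight `K(x) = exp(|x|²/4)`. -/
def Kw {N : ℕ} (x : En N) : ℝ := Real.exp (‖x‖ ^ 2 / 4)

/-- The Laplacian `Δu(x) = ∑ᵢ ∂²u/∂xᵢ²(x)`. -/
def lap {N : ℕ} (u : En N → ℝ) (x : En N) : ℝ :=
  ∑ i : Fin N, fderiv ℝ (fun y => fderiv ℝ u y (EuclideanSpace.single i (1:ℝ))) x
    (EuclideanSpace.single i (1:ℝ))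

/-- The critical Sobolev exponent `2* = 2N/(N−2)`. -/
def twoStar (N : ℕ) : ℝ := 2 * N / ((N : ℝ) - 2)

/-- `h(t) = βt^q + t^{p−1}` for `t ≥ 0`, `h(t) = 0` for `t ≤ 0` (with `p = 2*`). -/
def hfun (q p β : ℝ) (t : ℝ) : ℝ := if t ≤ 0 then 0 else β * t ^ q + t ^ (p - 1)

/-- The truncation `f` of `h`: `f = h` on `[0,ρ]`, `f(t) = ν₀t` for `t ≥ ρ`, `f = 0` on `(-∞,0]`. -/
def ffun (q p β ν₀ ρ : ℝ) (t : ℝ) : ℝ :=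
  if t ≤ 0 then 0 else if t ≤ ρ then β * t ^ q + t ^ (p - 1) else ν₀ * t

/-- `H(t) = ∫₀^t h`. -/
def Hfun (q p β : ℝ) (t : ℝ) : ℝ := ∫ τ in (0:ℝ)..t, hfun q p β τ

/-- `F(t) = ∫₀^t f`. -/
def Ffun (q p β ν₀ ρ : ℝ) (t : ℝ) : ℝ := ∫ τ in (0:ℝ)..t, ffun q p β ν₀ ρ τ

-- `g(x,t) = h(t)` for `x ∈ Ω'_Γ`, `g(x,t) = f(t)` otherwise.
open Classical in
def gfun {N : ℕ} (q p β ν₀ ρ : ℝ) (Ω' : Set (En N)) (x : En N) (t : ℝ) : ℝ :=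
  if x ∈ Ω' then hfun q p β t else ffun q p β ν₀ ρ t

-- `G(x,t) = H(t)` for `x ∈ Ω'_Γ`, `G(x,t) = F(t)` otherwise.
open Classical in
def Gfun {N : ℕ} (q p β ν₀ ρ : ℝ) (Ω' : Set (En N)) (x : En N) (t : ℝ) : ℝ :=
  if x ∈ Ω' then Hfun q p β t else Ffun q p β ν₀ ρ t

/-- The squared norm `‖u‖²_{K,λ} = ∫ K(|∇u|² + (λa+b)u²)`. -/
def nrmSq {N : ℕ} (lam : ℝ) (a b : En N → ℝ) (u : En N → ℝ) : ℝ :=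
  ∫ x, Kw x * (‖gradient u x‖ ^ 2 + (lam * a x + b x) * u x ^ 2)

/-- The modified functional
`Φ_λ(u) = (1/2)∫ K(|∇u|² + (λa+b)u²) − ∫ K G(x,u)`. -/
def Phi {N : ℕ} (q p β ν₀ ρ lam : ℝ) (a b : En N → ℝ) (Ω' : Set (En N)) (u : En N → ℝ) : ℝ :=
  (1/2) * nrmSq lam a b u - ∫ x, Kw x * Gfun q p β ν₀ ρ Ω' x (u x)

/-- The pairing `⟨Φ'_λ(u), φ⟩ = ∫ K(∇u·∇φ + (λa+b)uφ) − ∫ K g(x,u)φ`. -/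
def PhiD {N : ℕ} (q p β ν₀ ρ lam : ℝ) (a b : En N → ℝ) (Ω' : Set (En N)) (u φ : En N → ℝ) : ℝ :=
  (∫ x, Kw x * (⟪gradient u x, gradient φ x⟫ + (lam * a x + b x) * u x * φ x))
    - ∫ x, Kw x * gfun q p β ν₀ ρ Ω' x (u x) * φ x

theorem hpow_int {q p β t : ℝ} (hq : 1 < q) (hp : q + 1 < p) :
    ∫ τ in (0:ℝ)..t, (β * τ ^ q + τ ^ (p - 1)) = β * t ^ (q+1) / (q+1) + t ^ p / p := by
  rw [intervalIntegral.integral_add, intervalIntegral.integral_const_mul,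
    integral_rpow (Or.inl (by linarith)), integral_rpow (Or.inl (by linarith)),
    Real.zero_rpow (by linarith), Real.zero_rpow (by linarith)]
  · rw [sub_add_cancel]; ring
  · exact (intervalIntegral.intervalIntegrable_rpow' (by linarith)).const_mul _
  · exact intervalIntegral.intervalIntegrable_rpow' (by linarith)

theorem Hpos_eq {q p β t : ℝ} (hq : 1 < q) (hp : q + 1 < p) (ht : 0 ≤ t) :
    Hfun q p β t = β * t ^ (q+1) / (q+1) + t ^ p / p := by
  rw [← hpow_int hq hp, Hfun]
  apply intervalIntegral.integral_congr
  intro τ hτ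
  rw [Set.uIcc_of_le ht] at hτ
  simp only [hfun]
  split_ifs with h
  · have : τ = 0 := le_antisymm h hτ.1
    subst this
    rw [Real.zero_rpow (by linarith), Real.zero_rpow (by linarith)]; ring
  · rfl

theorem Fmid_eq {q p β ν₀ ρ t : ℝ} (ht : 0 ≤ t) (htρ : t ≤ ρ) :
    Ffun q p β ν₀ ρ t = Hfun q p β t := by
  apply intervalIntegral.integral_congr
  intro τ hτ
  rw [Set.uIcc_of_le ht] at hτ
  simp only [hfun, ffun, if_pos (hτ.2.trans htρ)]

theorem Hneg_eq {q p β t : ℝ} (ht : t ≤ 0) : Hfun q p β t = 0 := by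
  rw [Hfun, intervalIntegral.integral_congr (g := fun _ => 0)]
  · simp
  intro τ hτ
  rw [Set.uIcc_of_ge ht] at hτ
  simp only [hfun, if_pos hτ.2]

theorem Fneg_eq {q p β ν₀ ρ t : ℝ} (ht : t ≤ 0) : Ffun q p β ν₀ ρ t = 0 := by
  rw [Ffun, intervalIntegral.integral_congr (g := fun _ => 0)]
  · simp
  intro τ hτ
  rw [Set.uIcc_of_ge ht] at hτ
  simp only [ffun, if_pos hτ.2]

theorem H_le {q p β t : ℝ} (hq : 1 < q) (hp : q + 1 < p) (ht : 0 < t) :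
    Hfun q p β t ≤ 1/(q+1) * (β * t ^ q + t ^ (p - 1)) * t := by
  rw [Hpos_eq hq hp ht.le]
  have h1 : t ^ (q+1) = t ^ q * t := by rw [Real.rpow_add ht, Real.rpow_one]
  have h2 : t ^ p = t ^ (p-1) * t := by
    rw [← Real.rpow_add_one ht.ne', sub_add_cancel]
  have h3 : t ^ p / p ≤ t ^ p / (q+1) := by
    have := Real.rpow_nonneg ht.le p
    gcongr
  have h4 : 1/(q+1) * (β * t ^ q + t ^ (p - 1)) * t
      = β * t ^ (q+1) / (q+1) + t ^ p / (q+1) := by rw [h1, h2]; ring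
  linarith

theorem Fbig_eq {q p β ν₀ ρ t : ℝ} (hq : 1 < q) (hp : q + 1 < p) (hρ : 0 < ρ)
    (hρeq : β * ρ ^ q + ρ ^ (p - 1) = ν₀ * ρ) (ht : ρ ≤ t) :
    Ffun q p β ν₀ ρ t = Hfun q p β ρ + ν₀ * (t^2 - ρ^2) / 2 := by
  have e1 : Set.EqOn (ffun q p β ν₀ ρ) (fun τ => β * τ ^ q + τ ^ (p - 1)) (Set.uIcc 0 ρ) := by
    intro τ hτ
    rw [Set.uIcc_of_le hρ.le] at hτ
    simp only [ffun, if_pos hτ.2]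
    split_ifs with h
    · have : τ = 0 := le_antisymm h hτ.1
      subst this
      rw [Real.zero_rpow (by linarith), Real.zero_rpow (by linarith)]; ring
    · rfl
  have e2 : Set.EqOn (ffun q p β ν₀ ρ) (fun τ => ν₀ * τ) (Set.uIcc ρ t) := by
    intro τ hτ
    rw [Set.uIcc_of_le ht] at hτ
    have : ¬ τ ≤ 0 := by linarith [hτ.1]
    simp only [ffun, if_neg this]
    split_ifs with h
    · have : τ = ρ := le_antisymm h hτ.1
      rw [this, hρeq]
    · rfl
  have i1 : IntervalIntegrable (ffun q p β ν₀ ρ) volume 0 ρ := by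
    refine IntervalIntegrable.congr (fun τ hτ => (e1 (Set.uIoc_subset_uIcc hτ)).symm) ?_
    exact ((intervalIntegral.intervalIntegrable_rpow' (by linarith)).const_mul _).add
      (intervalIntegral.intervalIntegrable_rpow' (by linarith))
  have i2 : IntervalIntegrable (ffun q p β ν₀ ρ) volume ρ t := by
    refine IntervalIntegrable.congr (fun τ hτ => (e2 (Set.uIoc_subset_uIcc hτ)).symm) ?_
    exact Continuous.intervalIntegrable (by fun_prop) _ _
  rw [← Fmid_eq (ν₀ := ν₀) hρ.le le_rfl, Ffun, Ffun,
    ← intervalIntegral.integral_add_adjacent_intervals i1 i2,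
    intervalIntegral.integral_congr e2, intervalIntegral.integral_const_mul, integral_id]
  ring

theorem G_le {N : ℕ} {q p β ν₀ ρ : ℝ} (hq : 1 < q) (hp : q + 1 < p) (hρ : 0 < ρ) (hν₀ : 0 < ν₀)
    (hρeq : β * ρ ^ q + ρ ^ (p - 1) = ν₀ * ρ) (S : Set (En N)) (x : En N) (t : ℝ) :
    Gfun q p β ν₀ ρ S x t ≤ 1/(q+1) * (gfun q p β ν₀ ρ S x t * t)
      + (1/2 - 1/(q+1)) * ν₀ * t^2 := by
  have hc : 0 ≤ 1/2 - 1/(q+1) := by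
    have : 1/(q+1) ≤ 1/2 := by apply one_div_le_one_div_of_le <;> linarith
    linarith
  have hct : 0 ≤ (1/2 - 1/(q+1)) * ν₀ * t^2 := by positivity
  unfold Gfun gfun
  rcases le_or_gt t 0 with ht | ht
  · simp only [Hneg_eq ht, Fneg_eq ht, hfun, ffun, if_pos ht, ite_self]
    linarith
  · have hH := H_le (β := β) hq hp ht
    split_ifs with hx
    · simp only [hfun, if_neg ht.not_ge]
      linarith
    · simp only [ffun, if_neg ht.not_ge]
      split_ifs with h
      · rw [Fmid_eq ht.le h]; linarith
      · have hR := H_le (β := β) hq hp hρ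
        rw [Fbig_eq hq hp hρ hρeq (not_le.mp h).le]
        rw [hρeq] at hR
        have : 0 ≤ (1/2 - 1/(q+1)) * ν₀ * ρ^2 := by positivity
        nlinarith

/-- under (a₁), (b₁), (a₂), for the truncated functional `Φ_λ`, if
`δ₀ ∈ (0,1)` and `ν₀ > 0` are constants for which
`δ₀‖u‖²_{K,λ} ≤ ‖u‖²_{K,λ} − ν₀∫Ku²` holds for all `λ ≥ 1` and admissible `u`, then
`δ₀(1/2 − 1/(q+1))‖u‖²_{K,λ} ≤ Φ_λ(u) − (1/(q+1))⟨Φ'_λ(u), u⟩`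
for every `λ ≥ 1` and every admissible `u`. -/
theorem PS_lower_estimate {N k : ℕ} (hN : 3 ≤ N) (hk : 0 < k)
    (q : ℝ) (hq1 : 1 < q) (hq2 : q < twoStar N - 1)
    (a b : En N → ℝ)
    (ha_cont : Continuous a) (ha_nonneg : ∀ x, 0 ≤ a x)
    (Ωs : Fin k → Set (En N))
    (hΩ_open : ∀ j, IsOpen (Ωs j))
    (hΩ_ne : ∀ j, (Ωs j).Nonempty)
    (hΩ_conn : ∀ j, IsConnected (Ωs j))
    (hΩ_sep : ∀ i j, i ≠ j → ∃ d > (0:ℝ), ∀ x ∈ Ωs i, ∀ y ∈ Ωs j, d ≤ dist x y)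
    (hΩ_int : interior (a ⁻¹' {0}) = ⋃ j, Ωs j)
    (hΩ_bdd : Bornology.IsBounded (⋃ j, Ωs j))
    (hΩ_cl : a ⁻¹' {0} = closure (⋃ j, Ωs j))
    (hb_cont : Continuous b) (M₁ : ℝ) (hM₁ : 0 < M₁) (hb_bdd : ∀ x, |b x| ≤ M₁)
    (M₀ : ℝ) (hM₀ : 0 < M₀) (hab : ∀ x, M₀ ≤ a x + b x)
    (Ωs' : Fin k → Set (En N))
    (hΩ'_open : ∀ j, IsOpen (Ωs' j))
    (hΩ'_bdd : ∀ j, Bornology.IsBounded (Ωs' j))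
    (hΩ'_sub : ∀ j, closure (Ωs j) ⊆ Ωs' j)
    (hΩ'_disj : ∀ i j, i ≠ j → closure (Ωs' i) ∩ closure (Ωs' j) = ∅)
    (Γ : Finset (Fin k)) (hΓ : Γ.Nonempty)
    (β : ℝ) (hβ : 0 < β) (ν₀ : ℝ) (hν₀ : 0 < ν₀) (ρ : ℝ) (hρ : 0 < ρ)
    (hρeq : β * ρ ^ (q - 1) + ρ ^ (twoStar N - 2) = ν₀)
    (δ₀ : ℝ) (hδ₀ : δ₀ ∈ Set.Ioo (0:ℝ) 1)
    (hδ : ∀ lam : ℝ, 1 ≤ lam → ∀ u : En N → ℝ, ContDiff ℝ 1 u →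
      Integrable (fun x => Kw x * (‖gradient u x‖ ^ 2 + (lam * a x + b x) * u x ^ 2)) →
      δ₀ * nrmSq lam a b u ≤ nrmSq lam a b u - ν₀ * ∫ x, Kw x * u x ^ 2) :
    ∀ lam : ℝ, 1 ≤ lam → ∀ u : En N → ℝ, ContDiff ℝ 1 u →
      Integrable (fun x => Kw x * (‖gradient u x‖ ^ 2 + (lam * a x + b x) * u x ^ 2)) →
      Integrable (fun x => Kw x * Gfun q (twoStar N) β ν₀ ρ (⋃ j ∈ Γ, Ωs' j) x (u x)) →
      Integrable (fun x => Kw x * gfun q (twoStar N) β ν₀ ρ (⋃ j ∈ Γ, Ωs' j) x (u x) * u x) →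
      δ₀ * (1/2 - 1/(q+1)) * nrmSq lam a b u ≤
        Phi q (twoStar N) β ν₀ ρ lam a b (⋃ j ∈ Γ, Ωs' j) u
          - (1/(q+1)) * PhiD q (twoStar N) β ν₀ ρ lam a b (⋃ j ∈ Γ, Ωs' j) u u := by
  intro lam hlam u hu hI hIG hIg
  have hp : q + 1 < twoStar N := by linarith
  have hρeq' : β * ρ ^ q + ρ ^ (twoStar N - 1) = ν₀ * ρ := by
    rw [← hρeq, add_mul, mul_assoc, ← Real.rpow_add_one hρ.ne', ← Real.rpow_add_one hρ.ne']
    congr 3 <;> ring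
  set S := ⋃ j ∈ Γ, Ωs' j
  have hc : 0 ≤ 1/2 - 1/(q+1) := by
    have : 1/(q+1) ≤ 1/2 := by apply one_div_le_one_div_of_le <;> linarith
    linarith
  have hKu : Integrable (fun x => Kw x * u x ^ 2) := by
    have huc := hu.continuous
    refine (hI.const_mul (1/M₀)).mono' ?_ ?_
    · apply Continuous.aestronglyMeasurable
      unfold Kw
      fun_prop
    · refine Eventually.of_forall fun x => ?_
      have hK : 0 < Kw x := Real.exp_pos _
      rw [Real.norm_of_nonneg (by positivity), one_div, inv_mul_eq_div, le_div_iff₀ hM₀]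
      have h1 : M₀ ≤ lam * a x + b x := by nlinarith [hab x, ha_nonneg x]
      have h2 : M₀ * u x ^ 2 ≤ (lam * a x + b x) * u x ^ 2 := by gcongr
      have h3 : u x ^ 2 * M₀ ≤ ‖gradient u x‖ ^ 2 + (lam * a x + b x) * u x ^ 2 := by
        nlinarith [sq_nonneg ‖gradient u x‖]
      rw [mul_assoc]
      gcongr
  have hG : ∫ x, Kw x * Gfun q (twoStar N) β ν₀ ρ S x (u x) ≤
      1/(q+1) * (∫ x, Kw x * gfun q (twoStar N) β ν₀ ρ S x (u x) * u x)
        + (1/2 - 1/(q+1)) * ν₀ * ∫ x, Kw x * u x ^ 2 := by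
    rw [← integral_const_mul, ← integral_const_mul,
      ← integral_add (hIg.const_mul _) (hKu.const_mul _)]
    refine integral_mono hIG ((hIg.const_mul _).add (hKu.const_mul _)) fun x => ?_
    have hK : 0 < Kw x := Real.exp_pos _
    have := mul_le_mul_of_nonneg_left (G_le hq1 hp hρ hν₀ hρeq' S x (u x)) hK.le
    simp only []
    linarith
  have hD : ∫ x, Kw x * (⟪gradient u x, gradient u x⟫ + (lam * a x + b x) * u x * u x)
      = nrmSq lam a b u := by
    unfold nrmSq
    congr 1
    ext x
    rw [real_inner_self_eq_norm_sq]
    ring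
  have h0 := mul_le_mul_of_nonneg_left (hδ lam hlam u hu hI) hc
  unfold Phi PhiD
  rw [hD]
  nlinarith
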